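/- arXiv:2010.08515 — 2 statements merged into one kernel-verified Lean document; each statement's English description precedes it below -/
import Mathlib

section
/- For U, V ∈ O(d), if x ∼ N(0, I_{2d}) and h_U(x) = sign(x_{1:d}ᵀ U x_{d+1:2d}), then P(h_U(x) ≠ h_V(x)) = (1/π) · E_{u ∼ Uniform(S^{d-1})}[ arccos( uᵀ U Vᵀ u ) ]. -/
open Matrix

open MeasureTheory ProbabilityTheory

/-- The uniform (normalized surface) probability measure on the unit sphere in `ℝ^d`. -/
noncomputable def uniformSphere (d : ℕ) :
    Measure (Metric.sphere (0 : EuclideanSpace ℝ (Fin d)) 1) :=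
  ((volume : Measure (EuclideanSpace ℝ (Fin d))).toSphere Set.univ)⁻¹ •
    (volume : Measure (EuclideanSpace ℝ (Fin d))).toSphere

/-- The standard Gaussian measure `N(0, I_{2d})` on `ℝ^{2d}`, coordinates indexed by
`Fin d ⊕ Fin d`. -/
noncomputable def stdGaussian2 (d : ℕ) : Measure (Fin d ⊕ Fin d → ℝ) :=
  Measure.pi fun _ => gaussianReal 0 1

open scoped ENNReal RealInnerProductSpace

section General
variable {E : Type*} [NormedAddCommGroup E] [InnerProductSpace ℝ E] [FiniteDimensional ℝ E]
  [MeasurableSpace E] [BorelSpace E]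

/-- The standard Gaussian measure has a radial density. -/
lemma exists_stdGaussian_eq_withDensity :
    ∃ g : ℝ → ℝ≥0∞, Measurable g ∧
      stdGaussian E = (volume : Measure E).withDensity fun x => g ‖x‖ := by
  set K : ℝ := (2 * Real.pi) ^ (Module.finrank ℝ E / 2 : ℝ) with hK
  have hKpos : 0 < K := by positivity
  let h : E → ℝ := fun x => K⁻¹ * Real.exp (-(1 / 2) * ‖x‖ ^ 2)
  have hKC : ((Real.pi : ℂ) / (1 / 2 : ℂ)) ^ (Module.finrank ℝ E / 2 : ℂ) = (K : ℂ) := by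
    rw [hK, Complex.ofReal_cpow (by positivity)]
    push_cast
    congr 1
    ring
  have hint : Integrable h := by
    have := (GaussianFourier.integrable_cexp_neg_mul_sq_norm_add (V := E) (b := (1 / 2 : ℂ)) (by norm_num) 0 0).re
    refine (this.const_mul K⁻¹).congr (.of_forall fun x => ?_)
    have : (-(1 / 2 : ℂ) * (‖x‖ : ℂ) ^ 2 + 0 * ((⟪(0 : E), x⟫ : ℝ) : ℂ))
        = ((-(1 / 2) * ‖x‖ ^ 2 : ℝ) : ℂ) := by push_cast; ring
    simp only [h, this]
    rw [← Complex.ofReal_exp]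
    rfl
  have hnn : ∀ x, 0 ≤ h x := fun x => by positivity
  refine ⟨fun r => ENNReal.ofReal (K⁻¹ * Real.exp (-(1 / 2) * r ^ 2)), by fun_prop, ?_⟩
  change stdGaussian E = (volume : Measure E).withDensity fun x => ENNReal.ofReal (h x)
  have : IsFiniteMeasure ((volume : Measure E).withDensity fun x => ENNReal.ofReal (h x)) :=
    isFiniteMeasure_withDensity_ofReal hint.2
  apply Measure.ext_of_charFun
  ext t
  rw [charFun_stdGaussian, charFun_apply,
    integral_withDensity_eq_integral_toReal_smul (by fun_prop) (.of_forall fun x => by simp)]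
  have key := GaussianFourier.integral_cexp_neg_mul_sq_norm_add (V := E) (b := (1 / 2 : ℂ)) (by norm_num)
    Complex.I t
  rw [hKC] at key
  have hcongr : ∀ x : E, (ENNReal.ofReal (h x)).toReal • Complex.exp ((⟪x, t⟫ : ℝ) * Complex.I)
      = (K : ℂ)⁻¹ * Complex.exp (-(1 / 2 : ℂ) * (‖x‖ : ℂ) ^ 2 + Complex.I * (⟪t, x⟫ : ℝ)) := by
    intro x
    rw [ENNReal.toReal_ofReal (hnn x), Complex.real_smul, Complex.exp_add, real_inner_comm]
    simp only [h]
    push_cast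
    ring_nf
  simp_rw [hcongr]
  rw [integral_const_mul, key, inv_mul_cancel_left₀ (by exact_mod_cast hKpos.ne')]
  congr 1
  rw [Complex.I_sq]
  ring

/-- Pairs of inner products against a standard Gaussian vector have a law that depends only on
the Gram matrix of the directions. -/
lemma map_inner_pair_stdGaussian_congr {F : Type*} [NormedAddCommGroup F] [InnerProductSpace ℝ F]
    [FiniteDimensional ℝ F] [MeasurableSpace F] [BorelSpace F] {a b : E} {v w : F}
    (haa : ⟪a, a⟫ = ⟪v, v⟫) (hab : ⟪a, b⟫ = ⟪v, w⟫) (hbb : ⟪b, b⟫ = ⟪w, w⟫) :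
    (stdGaussian E).map (fun y => (⟪a, y⟫, ⟪b, y⟫))
      = (stdGaussian F).map (fun y => (⟪v, y⟫, ⟪w, y⟫)) := by
  change (stdGaussian E).map ((innerSL ℝ a).prod (innerSL ℝ b)) =
    (stdGaussian F).map ((innerSL ℝ v).prod (innerSL ℝ w))
  apply Measure.ext_of_charFunDual
  ext L
  rw [charFunDual_map, charFunDual_map, charFunDual_stdGaussian, charFunDual_stdGaussian]
  have hL : ∀ p : ℝ × ℝ, L p = p.1 * L (1, 0) + p.2 * L (0, 1) := fun p => by
    rw [← smul_eq_mul, ← smul_eq_mul, ← map_smul, ← map_smul, ← map_add]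
    simp
  have h1 : L.comp ((innerSL ℝ a).prod (innerSL ℝ b))
      = innerSL ℝ (L (1, 0) • a + L (0, 1) • b) := by
    ext y
    simp only [ContinuousLinearMap.comp_apply, ContinuousLinearMap.prod_apply, innerSL_apply_apply,
      inner_add_left, inner_smul_left]
    rw [hL]; simp [mul_comm]
  have h2 : L.comp ((innerSL ℝ v).prod (innerSL ℝ w))
      = innerSL ℝ (L (1, 0) • v + L (0, 1) • w) := by
    ext y
    simp only [ContinuousLinearMap.comp_apply, ContinuousLinearMap.prod_apply, innerSL_apply_apply,
      inner_add_left, inner_smul_left]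
    rw [hL]; simp [mul_comm]
  have h3 : ‖L (1, 0) • a + L (0, 1) • b‖ ^ 2 = ‖L (1, 0) • v + L (0, 1) • w‖ ^ 2 := by
    simp only [← real_inner_self_eq_norm_sq, inner_add_left, inner_add_right, inner_smul_left,
      inner_smul_right, real_inner_comm a b, real_inner_comm v w, haa, hab, hbb]
  rw [h1, h2, innerSL_apply_norm, innerSL_apply_norm]
  norm_cast
  rw [h3]

/-- Polar decomposition of the standard Gaussian: the direction is uniform on the sphere. -/
lemma lintegral_stdGaussian_eq_lintegral_toSphere [Nontrivial E] {f : E → ℝ≥0∞}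
    (hf : Measurable f) (hhom : ∀ r : ℝ, 0 < r → ∀ x, f (r • x) = f x) :
    ∫⁻ x, f x ∂(stdGaussian E)
      = ∫⁻ u, f (u : E) ∂(((volume : Measure E).toSphere Set.univ)⁻¹ •
          (volume : Measure E).toSphere) := by
  obtain ⟨g, hg, hγ⟩ := exists_stdGaussian_eq_withDensity (E := E)
  let c : ℝ≥0∞ := ∫⁻ r : Set.Ioi (0 : ℝ), g r ∂(.volumeIoiPow (Module.finrank ℝ E - 1))
  have polar : ∀ f : E → ℝ≥0∞, Measurable f → (∀ r : ℝ, 0 < r → ∀ x, f (r • x) = f x) →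
      ∫⁻ x, f x ∂(stdGaussian E) = (∫⁻ u, f (u : E) ∂(volume : Measure E).toSphere) * c := by
    intro f hf hhom
    calc ∫⁻ x, f x ∂(stdGaussian E) = ∫⁻ x, g ‖x‖ * f x := by
          rw [hγ, lintegral_withDensity_eq_lintegral_mul _ (by fun_prop) hf]
          rfl
      _ = ∫⁻ x : ({0}ᶜ : Set E), g ‖(x : E)‖ * f x ∂((volume : Measure E).comap (↑)) := by
          rw [lintegral_subtype_comap (measurableSet_singleton _).compl fun x ↦ g ‖x‖ * f x,
            restrict_compl_singleton]
      _ = ∫⁻ p, f (p.1 : E) * g p.2 ∂((volume : Measure E).toSphere.prod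
            (.volumeIoiPow (Module.finrank ℝ E - 1))) := by
          rw [← (volume : Measure E).measurePreserving_homeomorphUnitSphereProd.lintegral_comp_emb
            (Homeomorph.measurableEmbedding _)]
          refine lintegral_congr fun x => ?_
          have hx : 0 < ‖(x : E)‖ := norm_pos_iff.2 x.2
          rw [homeomorphUnitSphereProd_apply_snd_coe, homeomorphUnitSphereProd_apply_fst_coe,
            hhom _ (inv_pos.2 hx), mul_comm]
      _ = _ := 
          lintegral_prod_mul (f := fun u : Metric.sphere (0 : E) 1 => f u)
            (g := fun r : Set.Ioi (0 : ℝ) => g r) (by fun_prop) (by fun_prop)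
  have hone := polar (fun _ => 1) measurable_const (fun _ _ _ => rfl)
  simp only [lintegral_const, measure_univ, one_mul] at hone
  rw [polar f hf hhom, lintegral_smul_measure, smul_eq_mul, mul_comm]
  congr 1
  exact ENNReal.eq_inv_of_mul_eq_one_left (by rw [mul_comm]; exact hone.symm)

end General

/-- The standard Gaussian mass of a planar cone is proportional to the measure of its set of
angles. -/
lemma exists_stdGaussian_complex_cone : ∃ c : ℝ≥0∞, ∀ (A : Set ℂ) (T : Set ℝ), MeasurableSet A →
    MeasurableSet T → (∀ r : ℝ, 0 < r → ∀ φ ∈ Set.Ioo (-Real.pi) Real.pi,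
      (Complex.polarCoord.symm (r, φ) ∈ A ↔ φ ∈ T)) →
    stdGaussian ℂ A = c * volume (T ∩ Set.Ioo (-Real.pi) Real.pi) := by
  obtain ⟨g, hg, hγ⟩ := exists_stdGaussian_eq_withDensity (E := ℂ)
  refine ⟨∫⁻ r in Set.Ioi (0 : ℝ), ENNReal.ofReal r * g r, fun A T hA hT hAT => ?_⟩
  calc stdGaussian ℂ A = ∫⁻ z, A.indicator (fun z => g ‖z‖) z := by
        rw [hγ, withDensity_apply _ hA, lintegral_indicator hA]
    _ = ∫⁻ p in Set.Ioi (0 : ℝ) ×ˢ Set.Ioo (-Real.pi) Real.pi,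
          (ENNReal.ofReal p.1 * g p.1) * T.indicator 1 p.2 := by
        rw [← Complex.lintegral_comp_polarCoord_symm]
        refine setLIntegral_congr_fun (measurableSet_Ioi.prod measurableSet_Ioo) fun p hp => ?_
        have h : Complex.polarCoord.symm p ∈ A ↔ p.2 ∈ T := hAT p.1 hp.1 p.2 hp.2
        have hnorm : ‖Complex.polarCoord.symm p‖ = p.1 := by
          rw [Complex.norm_polarCoord_symm, abs_of_pos hp.1]
        by_cases hT : p.2 ∈ T
        · rw [Set.indicator_of_mem (h.2 hT), Set.indicator_of_mem hT, hnorm]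
          simp
        · rw [Set.indicator_of_notMem (mt h.1 hT), Set.indicator_of_notMem hT]
          simp
    _ = _ := by
        rw [Measure.volume_eq_prod, ← Measure.prod_restrict,
          lintegral_prod_mul (f := fun r => ENNReal.ofReal r * g r) (by fun_prop)
            ((measurable_one.indicator hT).aemeasurable),
          lintegral_indicator_one hT, Measure.restrict_apply hT]

lemma measurableSet_inner_pos_inner_neg {E : Type*} [NormedAddCommGroup E] [InnerProductSpace ℝ E]
    [MeasurableSpace E] [BorelSpace E] (a b : E) :
    MeasurableSet {z : E | 0 < ⟪a, z⟫ ∧ ⟪b, z⟫ < 0} :=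
  have h (c : E) : Continuous fun z : E => ⟪c, z⟫ := by fun_prop
  ((isOpen_lt continuous_const (h a)).inter (isOpen_lt (h b) continuous_const)).measurableSet

lemma stdGaussian_complex_sector {θ : ℝ} (h0 : 0 ≤ θ) (hπ : θ ≤ Real.pi) :
    stdGaussian ℂ {z | 0 < ⟪(1 : ℂ), z⟫ ∧ ⟪Complex.exp (θ * Complex.I), z⟫ < 0}
      = ENNReal.ofReal (θ / (2 * Real.pi)) := by
  have hpi := Real.pi_pos
  obtain ⟨c, hc⟩ := exists_stdGaussian_complex_cone
  have huniv := hc Set.univ Set.univ .univ .univ (by simp)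
  rw [measure_univ, Set.univ_inter, Real.volume_Ioo] at huniv
  have hc' : c = (ENNReal.ofReal (2 * Real.pi))⁻¹ := by
    refine ENNReal.eq_inv_of_mul_eq_one_left ?_
    rw [huniv]; ring_nf
  rw [hc _ (Set.Ioo (-(Real.pi / 2)) (θ - Real.pi / 2)) _ measurableSet_Ioo, Set.inter_eq_left.2,
    Real.volume_Ioo, hc', ENNReal.ofReal_div_of_pos (by positivity), mul_comm, div_eq_mul_inv]
  · congr 2
    ring
  · exact Set.Ioo_subset_Ioo (by linarith) (by linarith)
  · intro r hr φ hφ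
    have h1 : ⟪(1 : ℂ), Complex.polarCoord.symm (r, φ)⟫ = r * Real.cos φ := by
      simp [Complex.inner, Complex.cos_ofReal_re]
    have h2 : ⟪Complex.exp (θ * Complex.I), Complex.polarCoord.symm (r, φ)⟫
        = r * Real.cos (φ - θ) := by
      rw [Complex.exp_mul_I, Real.cos_sub]
      simp [Complex.inner, ← Complex.ofReal_cos, ← Complex.ofReal_sin]
      ring
    simp only [Set.mem_ofPred_eq, h1, h2, Set.mem_Ioo, mul_pos_iff_of_pos_left hr]
    rw [← neg_pos, ← mul_neg, mul_pos_iff_of_pos_left hr, neg_pos]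
    constructor
    · rintro ⟨hcos, hcos'⟩
      have hlow : -(Real.pi / 2) < φ := by
        by_contra! h
        have := Real.cos_nonpos_of_pi_div_two_le_of_le (x := -φ) (by linarith) (by linarith [hφ.1])
        rw [Real.cos_neg] at this
        linarith
      have hhigh : φ < Real.pi / 2 := by
        by_contra! h
        linarith [Real.cos_nonpos_of_pi_div_two_le_of_le h (by linarith [hφ.2])]
      refine ⟨hlow, ?_⟩
      by_contra! h
      linarith [Real.cos_nonneg_of_neg_pi_div_two_le_of_le (x := φ - θ) (by linarith)
        (by linarith)]
    · rintro ⟨hl, hh⟩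
      refine ⟨Real.cos_pos_of_mem_Ioo ⟨by linarith, by linarith⟩, ?_⟩
      rw [← Real.cos_neg]
      exact Real.cos_neg_of_pi_div_two_lt_of_lt (by linarith) (by linarith)
  · exact measurableSet_inner_pos_inner_neg _ _

lemma stdGaussian_inner_eq_zero {E : Type*} [NormedAddCommGroup E] [InnerProductSpace ℝ E]
    [FiniteDimensional ℝ E] [MeasurableSpace E] [BorelSpace E] {a : E} (ha : a ≠ 0) :
    stdGaussian E {z | ⟪a, z⟫ = 0} = 0 := by
  obtain ⟨g, -, hγ⟩ := exists_stdGaussian_eq_withDensity (E := E)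
  rw [hγ]
  refine withDensity_absolutelyContinuous _ _ ?_
  refine Measure.addHaar_submodule volume (LinearMap.ker (innerₛₗ ℝ a)) fun h => ?_
  have : a ∈ LinearMap.ker (innerₛₗ ℝ a) := h ▸ Submodule.mem_top
  simp at this
  exact ha this

lemma Real.sign_ne_sign_iff {x y : ℝ} (hx : x ≠ 0) (hy : y ≠ 0) :
    Real.sign x ≠ Real.sign y ↔ (0 < x ∧ y < 0) ∨ (x < 0 ∧ 0 < y) := by
  rcases hx.lt_or_gt with hx | hx <;> rcases hy.lt_or_gt with hy | hy <;>
    simp [Real.sign_of_pos, Real.sign_of_neg, hx, hy, hx.not_gt, hy.not_gt] <;>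
    norm_num

lemma Real.measurable_sign : Measurable Real.sign :=
  Measurable.ite measurableSet_Iio measurable_const
    (Measurable.ite measurableSet_Ioi measurable_const measurable_const)

lemma stdGaussian_complex_sign_ne {θ : ℝ} (h0 : 0 ≤ θ) (hπ : θ ≤ Real.pi) :
    stdGaussian ℂ {z | Real.sign ⟪(1 : ℂ), z⟫ ≠ Real.sign ⟪Complex.exp (θ * Complex.I), z⟫}
      = ENNReal.ofReal (θ / Real.pi) := by
  set b : ℂ := Complex.exp (θ * Complex.I)
  let S : Set ℂ := {z | 0 < ⟪(1 : ℂ), z⟫ ∧ ⟪b, z⟫ < 0}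
  have hS : MeasurableSet S := measurableSet_inner_pos_inner_neg _ _
  have hae : ({z | Real.sign ⟪(1 : ℂ), z⟫ ≠ Real.sign ⟪b, z⟫} : Set ℂ)
      =ᵐ[stdGaussian ℂ] (S ∪ Neg.neg ⁻¹' S : Set ℂ) := by
    have h1 : ∀ᵐ z ∂(stdGaussian ℂ), ⟪(1 : ℂ), z⟫ ≠ 0 :=
      measure_eq_zero_iff_ae_notMem.1 (stdGaussian_inner_eq_zero one_ne_zero)
    have h2 : ∀ᵐ z ∂(stdGaussian ℂ), ⟪b, z⟫ ≠ 0 :=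
      measure_eq_zero_iff_ae_notMem.1 (stdGaussian_inner_eq_zero (Complex.exp_ne_zero _))
    filter_upwards [h1, h2] with z hz1 hz2
    apply propext
    change Real.sign ⟪(1 : ℂ), z⟫ ≠ Real.sign ⟪b, z⟫ ↔ z ∈ S ∪ Neg.neg ⁻¹' S
    rw [Real.sign_ne_sign_iff hz1 hz2]
    simp only [S, Set.mem_union, Set.mem_preimage, Set.mem_ofPred_eq, inner_neg_right, neg_pos,
      neg_lt_zero]
  have hneg : stdGaussian ℂ (Neg.neg ⁻¹' S) = stdGaussian ℂ S := by
    conv_rhs => rw [← stdGaussian_map (LinearIsometryEquiv.neg ℝ (E := ℂ))]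
    rw [Measure.map_apply (by fun_prop) hS]
    rfl
  have hdisj : Disjoint S (Neg.neg ⁻¹' S) := by
    refine Set.disjoint_left.2 fun z hz hz' => ?_
    have h := hz'.1
    rw [inner_neg_right] at h
    linarith [hz.1]
  rw [measure_congr hae, measure_union hdisj (measurable_neg hS), hneg,
    show stdGaussian ℂ S = _ from stdGaussian_complex_sector h0 hπ,
    ← ENNReal.ofReal_add (by positivity) (by positivity)]
  congr 1
  field_simp
  ring

/-- Two half-spaces with unit normals `a`, `b` disagree on a standard Gaussian vector with
probability `arccos ⟪a, b⟫ / π`. -/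
lemma stdGaussian_sign_inner_ne {E : Type*} [NormedAddCommGroup E] [InnerProductSpace ℝ E]
    [FiniteDimensional ℝ E] [MeasurableSpace E] [BorelSpace E] {a b : E}
    (ha : ‖a‖ = 1) (hb : ‖b‖ = 1) :
    stdGaussian E {y | Real.sign ⟪a, y⟫ ≠ Real.sign ⟪b, y⟫}
      = ENNReal.ofReal (Real.arccos ⟪a, b⟫ / Real.pi) := by
  set θ := Real.arccos ⟪a, b⟫
  have habs : |⟪a, b⟫| ≤ 1 := by simpa [ha, hb] using abs_real_inner_le_norm a b
  have hcos : Real.cos θ = ⟪a, b⟫ :=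
    Real.cos_arccos (neg_le_of_abs_le habs) (le_of_abs_le habs)
  have hlaw := map_inner_pair_stdGaussian_congr (a := a) (b := b) (v := (1 : ℂ))
    (w := Complex.exp (θ * Complex.I))
    (by simp [ha])
    (by simp [Complex.inner, Complex.exp_ofReal_mul_I_re, hcos])
    (by rw [real_inner_self_eq_norm_sq, real_inner_self_eq_norm_sq, hb,
      Complex.norm_exp_ofReal_mul_I])
  have hD : MeasurableSet {p : ℝ × ℝ | Real.sign p.1 ≠ Real.sign p.2} :=
    (measurableSet_eq_fun (Real.measurable_sign.comp measurable_fst)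
      (Real.measurable_sign.comp measurable_snd)).compl
  have h := congrArg (fun μ => μ {p : ℝ × ℝ | Real.sign p.1 ≠ Real.sign p.2}) hlaw
  beta_reduce at h
  rw [Measure.map_apply (by fun_prop) hD, Measure.map_apply (by fun_prop) hD] at h
  exact h.trans (stdGaussian_complex_sign_ne (Real.arccos_nonneg _) (Real.arccos_le_pi _))

section Matrix
variable {d : ℕ}

lemma sum_mul_mul_eq_inner_transpose (U : Matrix (Fin d) (Fin d) ℝ) (x y : Fin d → ℝ) :
    ∑ i, ∑ j, x i * U i j * y j = ⟪WithLp.toLp 2 (Uᵀ *ᵥ x), WithLp.toLp 2 y⟫ := by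
  rw [EuclideanSpace.inner_toLp_toLp, star_trivial, Matrix.mulVec_transpose, dotProduct_comm,
    ← Matrix.dotProduct_mulVec]
  simp [dotProduct, Matrix.mulVec, Finset.mul_sum, mul_assoc]

lemma inner_transpose_mulVec (U V : Matrix (Fin d) (Fin d) ℝ) (x : Fin d → ℝ) :
    ⟪WithLp.toLp 2 (Uᵀ *ᵥ x), WithLp.toLp 2 (Vᵀ *ᵥ x)⟫
      = ∑ i, ∑ j, x i * (U * Vᵀ) i j * x j := by
  rw [sum_mul_mul_eq_inner_transpose, EuclideanSpace.inner_toLp_toLp,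
    EuclideanSpace.inner_toLp_toLp, Matrix.transpose_mul, Matrix.transpose_transpose,
    ← Matrix.mulVec_mulVec, star_trivial, star_trivial, Matrix.mulVec_transpose V x,
    ← Matrix.dotProduct_mulVec]

lemma norm_transpose_mulVec {U : Matrix (Fin d) (Fin d) ℝ}
    (hU : U ∈ Matrix.orthogonalGroup (Fin d) ℝ) (x : EuclideanSpace ℝ (Fin d)) :
    ‖WithLp.toLp 2 (Uᵀ *ᵥ x.ofLp)‖ = ‖x‖ := by
  have h : U * Uᵀ = 1 := (Matrix.mem_orthogonalGroup_iff (Fin d) ℝ).1 hU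
  rw [← sq_eq_sq₀ (norm_nonneg _) (norm_nonneg _), ← real_inner_self_eq_norm_sq,
    inner_transpose_mulVec, h, sum_mul_mul_eq_inner_transpose, Matrix.transpose_one,
    Matrix.one_mulVec, ← real_inner_self_eq_norm_sq]

end Matrix

/-- The probability that the half-spaces with normals `Uᵀ x` and `Vᵀ x` disagree on a standard
Gaussian vector. -/
noncomputable def disagreement {d : ℕ} (U V : Matrix (Fin d) (Fin d) ℝ)
    (x : EuclideanSpace ℝ (Fin d)) : ℝ≥0∞ :=
  stdGaussian (EuclideanSpace ℝ (Fin d))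
    {y | Real.sign ⟪WithLp.toLp 2 (Uᵀ *ᵥ x.ofLp), y⟫ ≠ Real.sign ⟪WithLp.toLp 2 (Vᵀ *ᵥ x.ofLp), y⟫}

section Disagreement
variable {d : ℕ} (U V : Matrix (Fin d) (Fin d) ℝ)

lemma continuous_transpose_mulVec :
    Continuous fun x : EuclideanSpace ℝ (Fin d) => WithLp.toLp 2 (Uᵀ *ᵥ x.ofLp) :=
  (PiLp.continuous_toLp 2 _).comp
    (Continuous.matrix_mulVec continuous_const (PiLp.continuous_ofLp 2 _))

lemma measurableSet_sign_inner_ne :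
    MeasurableSet {p : EuclideanSpace ℝ (Fin d) × EuclideanSpace ℝ (Fin d) |
      Real.sign ⟪WithLp.toLp 2 (Uᵀ *ᵥ p.1.ofLp), p.2⟫
        ≠ Real.sign ⟪WithLp.toLp 2 (Vᵀ *ᵥ p.1.ofLp), p.2⟫} := by
  have h : ∀ W : Matrix (Fin d) (Fin d) ℝ,
      Measurable fun p : EuclideanSpace ℝ (Fin d) × EuclideanSpace ℝ (Fin d) =>
        Real.sign ⟪WithLp.toLp 2 (Wᵀ *ᵥ p.1.ofLp), p.2⟫ := fun W =>
    Real.measurable_sign.comp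
      (((continuous_transpose_mulVec W).comp continuous_fst).inner continuous_snd).measurable
  exact (measurableSet_eq_fun (h U) (h V)).compl

lemma measurable_disagreement : Measurable (disagreement U V) :=
  measurable_measure_prodMk_left (measurableSet_sign_inner_ne U V)

lemma Real.sign_mul_of_pos {r : ℝ} (hr : 0 < r) (x : ℝ) : Real.sign (r * x) = Real.sign x := by
  rcases lt_trichotomy x 0 with hx | rfl | hx
  · rw [Real.sign_of_neg hx, Real.sign_of_neg (mul_neg_of_pos_of_neg hr hx)]
  · simp
  · rw [Real.sign_of_pos hx, Real.sign_of_pos (mul_pos hr hx)]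

lemma disagreement_smul {r : ℝ} (hr : 0 < r) (x : EuclideanSpace ℝ (Fin d)) :
    disagreement U V (r • x) = disagreement U V x := by
  simp only [disagreement, WithLp.ofLp_smul, Matrix.mulVec_smul, WithLp.toLp_smul,
    real_inner_smul_left, Real.sign_mul_of_pos hr]

variable {U V}

lemma disagreement_of_norm_eq_one (hU : U ∈ Matrix.orthogonalGroup (Fin d) ℝ)
    (hV : V ∈ Matrix.orthogonalGroup (Fin d) ℝ) {u : EuclideanSpace ℝ (Fin d)} (hu : ‖u‖ = 1) :
    disagreement U V u
      = ENNReal.ofReal (Real.arccos (∑ i, ∑ j, u i * (U * Vᵀ) i j * u j) / Real.pi) := by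
  rw [disagreement, stdGaussian_sign_inner_ne (by rw [norm_transpose_mulVec hU, hu])
    (by rw [norm_transpose_mulVec hV, hu]), inner_transpose_mulVec]

variable (U V)

lemma stdGaussian2_sign_ne :
    stdGaussian2 d {x | Real.sign (∑ i, ∑ j, x (Sum.inl i) * U i j * x (Sum.inr j))
        ≠ Real.sign (∑ i, ∑ j, x (Sum.inl i) * V i j * x (Sum.inr j))}
      = ∫⁻ x, disagreement U V x ∂(stdGaussian (EuclideanSpace ℝ (Fin d))) := by
  have hT : Measurable (WithLp.toLp 2 : (Fin d → ℝ) → EuclideanSpace ℝ (Fin d)) := by fun_prop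
  have hmp := measurePreserving_sumPiEquivProdPi
    (fun _ : Fin d ⊕ Fin d => gaussianReal 0 1)
  have hprod := (MeasurePreserving.mk hT (map_pi_eq_stdGaussian (ι := Fin d))).prod
    (MeasurePreserving.mk hT (map_pi_eq_stdGaussian (ι := Fin d)))
  have h := (hprod.comp hmp).measure_preimage (measurableSet_sign_inner_ne U V).nullMeasurableSet
  rw [Measure.prod_apply (measurableSet_sign_inner_ne U V)] at h
  refine Eq.trans ?_ h
  rw [stdGaussian2]
  congr 1
  ext x
  simp only [Set.mem_ofPred_eq, sum_mul_mul_eq_inner_transpose]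
  rfl

end Disagreement

/-- For orthogonal `U, V` and `x ∼ N(0, I_{2d})`, with `h_U(x) = sign(x_{1:d}ᵀ U x_{d+1:2d})`,
`P(h_U(x) ≠ h_V(x)) = (1/π) · E_{u ∼ Uniform(S^{d-1})}[arccos(uᵀ U Vᵀ u)]`. -/
theorem stmt_11 (d : ℕ) (U V : Matrix (Fin d) (Fin d) ℝ)
    (hU : U ∈ Matrix.orthogonalGroup (Fin d) ℝ)
    (hV : V ∈ Matrix.orthogonalGroup (Fin d) ℝ) :
    (stdGaussian2 d {x | Real.sign (∑ i, ∑ j, x (Sum.inl i) * U i j * x (Sum.inr j))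
        ≠ Real.sign (∑ i, ∑ j, x (Sum.inl i) * V i j * x (Sum.inr j))}).toReal
      = (1 / Real.pi) *
        ∫ u : Metric.sphere (0 : EuclideanSpace ℝ (Fin d)) 1,
          Real.arccos (∑ i, ∑ j,
            (EuclideanSpace.equiv (Fin d) ℝ (u : EuclideanSpace ℝ (Fin d))) i
              * (U * Vᵀ) i j
              * (EuclideanSpace.equiv (Fin d) ℝ (u : EuclideanSpace ℝ (Fin d))) j)
          ∂(uniformSphere d) := by
  rcases d.eq_zero_or_pos with rfl | hd
  · have : IsEmpty (Metric.sphere (0 : EuclideanSpace ℝ (Fin 0)) 1) :=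
      ⟨fun u => zero_ne_one (α := ℝ) (by simpa [Subsingleton.elim u.1 0] using u.2)⟩
    simp [Measure.eq_zero_of_isEmpty]
  have : Nonempty (Fin d) := ⟨⟨0, hd⟩⟩
  rw [stdGaussian2_sign_ne, lintegral_stdGaussian_eq_lintegral_toSphere
    (measurable_disagreement U V) (fun r hr x => disagreement_smul U V hr x),
    ← integral_const_mul, integral_eq_lintegral_of_nonneg_ae]
  · rw [uniformSphere]
    congr 1
    refine lintegral_congr fun u => ?_
    rw [disagreement_of_norm_eq_one hU hV (by simp), one_div_mul_eq_div]
    rfl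
  · exact .of_forall fun u => mul_nonneg (by positivity) (Real.arccos_nonneg _)
  · refine Continuous.aestronglyMeasurable ?_
    refine continuous_const.mul (Real.continuous_arccos.comp ?_)
    fun_prop
end

section
/- There exists a constant C₁ > 0 such that for all d and all U, V ∈ O(d), P_{x ∼ N(0,I_{2d})}( sign(x_{1:d}ᵀ U x_{d+1:2d}) ≠ sign(x_{1:d}ᵀ V x_{d+1:2d}) ) ≥ C₁ ‖U − V‖_F / √d. -/
open MeasureTheory ProbabilityTheory

open Matrix

/-- The standard Gaussian measure on `Fin d → ℝ`. -/
noncomputable abbrev gaussianPi (d : ℕ) : Measure (Fin d → ℝ) :=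
  Measure.pi fun _ => gaussianReal 0 1

/-- A lower bound for the standard Gaussian density on `[-2, 2]`. -/
noncomputable def densityBound : ℝ := gaussianPDFReal 0 1 2

/-- The fourth moment of a standard Gaussian variable. -/
noncomputable def fourthMoment : ℝ := ∫ t, t ^ 4 ∂gaussianReal 0 1

lemma densityBound_pos : 0 < densityBound :=
  gaussianPDFReal_pos 0 1 2 one_ne_zero

lemma fourthMoment_nonneg : 0 ≤ fourthMoment :=
  integral_nonneg fun t => by positivity

lemma densityBound_le_gaussianPDFReal {t : ℝ} (ht : t ^ 2 ≤ 4) :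
    densityBound ≤ gaussianPDFReal 0 1 t := by
  unfold densityBound gaussianPDFReal
  gcongr ?_ * Real.exp ?_
  norm_num
  linarith

lemma mul_densityBound_le_gaussianReal_Ioo {a b : ℝ} (ha : -2 ≤ a) (hb : b ≤ 2) (hab : a ≤ b) :
    (b - a) * densityBound ≤ (gaussianReal 0 1).real (Set.Ioo a b) := by
  rw [measureReal_def, gaussianReal_apply_eq_integral 0 one_ne_zero,
    ENNReal.toReal_ofReal (integral_nonneg fun t => gaussianPDFReal_nonneg 0 1 t)]
  calc (b - a) * densityBound = ∫ _ in Set.Ioo a b, densityBound := by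
        simp [hab]
    _ ≤ _ := by
        refine setIntegral_mono_on (by simp) (integrable_gaussianPDFReal 0 1).integrableOn
          measurableSet_Ioo fun t ht => densityBound_le_gaussianPDFReal ?_
        nlinarith [ht.1, ht.2]

lemma hasGaussianLaw_id_gaussianPi (d : ℕ) :
    HasGaussianLaw (fun y : Fin d → ℝ => y) (gaussianPi d) := by
  have h := iIndepFun.hasGaussianLaw (P := gaussianPi d) (X := fun (i : Fin d) y => y i)
    (fun i => ?_) (iIndepFun_pi (X := fun _ t => t) fun i => aemeasurable_id)
  · exact h
  · have : MeasurePreserving (fun y : Fin d → ℝ => y i) (gaussianPi d) (gaussianReal 0 1) :=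
      measurePreserving_eval _ i
    refine ⟨?_⟩
    rw [this.map_eq]
    infer_instance

lemma hasGaussianLaw_dotProduct {d : ℕ} (w : Fin d → ℝ) :
    HasGaussianLaw (fun y => w ⬝ᵥ y) (gaussianPi d) :=
  (hasGaussianLaw_id_gaussianPi d).map_fun
    (LinearMap.toContinuousLinearMap (dotProductBilin ℝ ℝ w))

lemma hasGaussianLaw_dotProduct_prod {d : ℕ} (w z : Fin d → ℝ) :
    HasGaussianLaw (fun y => (w ⬝ᵥ y, z ⬝ᵥ y)) (gaussianPi d) :=
  (hasGaussianLaw_id_gaussianPi d).map_fun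
    (LinearMap.toContinuousLinearMap ((dotProductBilin ℝ ℝ w).prod (dotProductBilin ℝ ℝ z)))

lemma variance_dotProduct {d : ℕ} (w : Fin d → ℝ) :
    Var[fun y => w ⬝ᵥ y; gaussianPi d] = w ⬝ᵥ w := by
  have : (fun y : Fin d → ℝ => w ⬝ᵥ y) = ∑ i, fun y : Fin d → ℝ => w i * y i := by
    ext y; simp [dotProduct]
  rw [this, variance_sum_pi (X := fun i t => w i * t)
    fun i => (memLp_id_gaussianReal 2).const_mul _]
  refine Finset.sum_congr rfl fun i _ => ?_
  rw [variance_const_mul, variance_fun_id_gaussianReal]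
  simp [sq]

lemma integral_dotProduct {d : ℕ} (w : Fin d → ℝ) :
    ∫ y, w ⬝ᵥ y ∂gaussianPi d = 0 := by
  simp only [dotProduct]
  rw [integral_finsetSum]
  · simp [integral_const_mul, integral_eval]
  · exact fun i _ => (integrable_eval IsGaussian.integrable_id).const_mul _

/-- Under the standard Gaussian measure `y ↦ w ⬝ᵥ y` has the law of `|w|` times a standard
Gaussian variable. -/
lemma map_dotProduct_gaussianPi {d : ℕ} (w : Fin d → ℝ) :
    (gaussianPi d).map (fun y => w ⬝ᵥ y) =
      (gaussianReal 0 1).map (fun t => √(w ⬝ᵥ w) * t) := by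
  rw [(hasGaussianLaw_dotProduct w).map_eq_gaussianReal, variance_dotProduct, integral_dotProduct,
    gaussianReal_map_const_mul]
  have h : 0 ≤ w ⬝ᵥ w := Finset.sum_nonneg fun i _ => mul_self_nonneg _
  congr 1
  · simp
  · ext
    simp [h]

lemma indepFun_dotProduct {d : ℕ} {w z : Fin d → ℝ} (h : w ⬝ᵥ z = 0) :
    IndepFun (fun y => w ⬝ᵥ y) (fun y => z ⬝ᵥ y) (gaussianPi d) := by
  refine (hasGaussianLaw_dotProduct_prod w z).indepFun_of_covariance_eq_zero ?_
  have hadd := variance_fun_add (hasGaussianLaw_dotProduct w).memLp_two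
    (hasGaussianLaw_dotProduct z).memLp_two
  simp only [← add_dotProduct, variance_dotProduct] at hadd
  simp only [add_dotProduct, dotProduct_add, dotProduct_comm z w, h] at hadd
  linarith

lemma measureReal_dotProduct_preimage {d : ℕ} (w : Fin d → ℝ) {s : Set ℝ} (hs : MeasurableSet s) :
    (gaussianPi d).real ((fun y => w ⬝ᵥ y) ⁻¹' s) =
      (gaussianReal 0 1).real ((fun t => √(w ⬝ᵥ w) * t) ⁻¹' s) := by
  have hm : Measurable fun y : Fin d → ℝ => w ⬝ᵥ y := by unfold dotProduct; fun_prop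
  rw [← map_measureReal_apply hm hs, map_dotProduct_gaussianPi,
    map_measureReal_apply (by fun_prop) hs]

lemma le_measureReal_abs_dotProduct_lt {d : ℕ} (p : Fin d → ℝ) {r N : ℝ} (hr : 0 ≤ r)
    (hN : 0 < N) (hrN : r ≤ 2 * N) (hp : √(p ⬝ᵥ p) ≤ 2 * N) :
    densityBound * (r / N) ≤ (gaussianPi d).real ((fun y => p ⬝ᵥ y) ⁻¹' {t | |t| < r}) := by
  rw [measureReal_dotProduct_preimage p (measurableSet_lt (by fun_prop) (by fun_prop))]
  have hle : r / (2 * N) ≤ 1 := by rw [div_le_one (by positivity)]; exact hrN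
  have h0 : 0 ≤ r / (2 * N) := by positivity
  have h := mul_densityBound_le_gaussianReal_Ioo (a := -(r / (2 * N))) (b := r / (2 * N))
    (by linarith) (by linarith) (by linarith)
  refine le_trans (le_of_eq ?_) (h.trans (measureReal_mono fun t ht => ?_))
  · field_simp; ring
  · have ht' : |t| < r / (2 * N) := abs_lt.2 ht
    rw [lt_div_iff₀ (by positivity)] at ht'
    simp only [Set.mem_preimage, Set.mem_ofPred_eq, abs_mul, abs_of_nonneg (Real.sqrt_nonneg _)]
    nlinarith [abs_nonneg t]

lemma le_measureReal_lt_abs_dotProduct {d : ℕ} (q : Fin d → ℝ) (hq : 0 < √(q ⬝ᵥ q)) :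
    densityBound ≤
      (gaussianPi d).real ((fun y => q ⬝ᵥ y) ⁻¹' {t | √(q ⬝ᵥ q) < |t|}) := by
  rw [measureReal_dotProduct_preimage q (measurableSet_lt (by fun_prop) (by fun_prop))]
  have h := mul_densityBound_le_gaussianReal_Ioo (a := 1) (b := 2)
    (by norm_num) le_rfl (by norm_num)
  refine le_trans (le_of_eq (by ring)) (h.trans (measureReal_mono fun t ht => ?_))
  simp only [Set.mem_preimage, Set.mem_ofPred_eq, abs_mul, abs_of_nonneg (Real.sqrt_nonneg _)]
  nlinarith [le_abs_self t, ht.1]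

lemma sign_ne_sign_of_abs_add_lt_abs_sub {s t : ℝ} (h : |s + t| < |s - t|) :
    Real.sign s ≠ Real.sign t := by
  have hst : s * t < 0 := by nlinarith [sq_lt_sq.2 h]
  rcases mul_neg_iff.1 hst with ⟨hs, ht⟩ | ⟨hs, ht⟩
  · rw [Real.sign_of_pos hs, Real.sign_of_neg ht]; norm_num
  · rw [Real.sign_of_neg hs, Real.sign_of_pos ht]; norm_num

/-- Two vectors of equal length `N` induce different signs on a standard Gaussian vector with
probability at least a constant times their distance over `N`. -/
lemma le_measureReal_sign_dotProduct_ne {d : ℕ} {a b : Fin d → ℝ} {N : ℝ} (hN : 0 ≤ N)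
    (ha : a ⬝ᵥ a = N ^ 2) (hb : b ⬝ᵥ b = N ^ 2) :
    densityBound ^ 2 * (√((a - b) ⬝ᵥ (a - b)) / N) ≤
      (gaussianPi d).real {y | Real.sign (a ⬝ᵥ y) ≠ Real.sign (b ⬝ᵥ y)} := by
  rcases hN.eq_or_lt with rfl | hN
  · simp
  have hsq (v : Fin d → ℝ) : 0 ≤ v ⬝ᵥ v := Finset.sum_nonneg fun i _ => mul_self_nonneg _
  have hpar : (a + b) ⬝ᵥ (a + b) + (a - b) ⬝ᵥ (a - b) = (2 * N) ^ 2 := by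
    simp only [add_dotProduct, dotProduct_add, sub_dotProduct, dotProduct_sub, ha, hb]; ring
  have horth : (a + b) ⬝ᵥ (a - b) = 0 := by
    simp only [add_dotProduct, dotProduct_sub, ha, hb, dotProduct_comm b a]; ring
  have hp : √((a + b) ⬝ᵥ (a + b)) ≤ 2 * N :=
    Real.sqrt_le_iff.2 ⟨by positivity, by linarith [hsq (a - b)]⟩
  have hq : √((a - b) ⬝ᵥ (a - b)) ≤ 2 * N :=
    Real.sqrt_le_iff.2 ⟨by positivity, by linarith [hsq (a + b)]⟩
  set r := √((a - b) ⬝ᵥ (a - b)) with hr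
  rcases (show 0 ≤ r from Real.sqrt_nonneg _).eq_or_lt with h0 | h0
  · rw [← h0, zero_div, mul_zero]
    exact measureReal_nonneg
  have hind := (indepFun_dotProduct horth).measure_inter_preimage_eq_mul {t | |t| < r} {t | r < |t|}
    (measurableSet_lt (by fun_prop) (by fun_prop)) (measurableSet_lt (by fun_prop) (by fun_prop))
  have hindr := congrArg ENNReal.toReal hind
  rw [ENNReal.toReal_mul] at hindr
  simp only [← measureReal_def] at hindr
  calc densityBound ^ 2 * (r / N) = (densityBound * (r / N)) * densityBound := by ring
    _ ≤ _ := mul_le_mul (le_measureReal_abs_dotProduct_lt (a + b) h0.le hN hq hp)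
        (le_measureReal_lt_abs_dotProduct (a - b) h0) densityBound_pos.le measureReal_nonneg
    _ = _ := hindr.symm
    _ ≤ _ := by
        refine measureReal_mono fun y hy => sign_ne_sign_of_abs_add_lt_abs_sub ?_
        have h1 : |(a + b) ⬝ᵥ y| < r := hy.1
        have h2 : r < |(a - b) ⬝ᵥ y| := hy.2
        rw [← add_dotProduct, ← sub_dotProduct]
        exact h1.trans h2

lemma even_four : Even 4 := by decide

lemma integrable_dotProduct_pow {d : ℕ} (w : Fin d → ℝ) {k : ℕ} (hk : Even k) :
    Integrable (fun x => (w ⬝ᵥ x) ^ k) (gaussianPi d) := by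
  have h : MemLp (fun x => w ⬝ᵥ x) k (gaussianPi d) :=
    (hasGaussianLaw_dotProduct w).memLp (by simp)
  simpa [Real.norm_eq_abs, hk.pow_abs] using h.integrable_norm_pow'

lemma integral_dotProduct_sq {d : ℕ} (w : Fin d → ℝ) :
    ∫ x, (w ⬝ᵥ x) ^ 2 ∂gaussianPi d = w ⬝ᵥ w := by
  rw [← variance_dotProduct w, variance_of_integral_eq_zero
    (hasGaussianLaw_dotProduct w).aemeasurable (integral_dotProduct w)]

lemma integral_dotProduct_pow_four {d : ℕ} (w : Fin d → ℝ) :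
    ∫ x, (w ⬝ᵥ x) ^ 4 ∂gaussianPi d = (w ⬝ᵥ w) ^ 2 * fourthMoment := by
  have hsq : 0 ≤ w ⬝ᵥ w := Finset.sum_nonneg fun i _ => mul_self_nonneg _
  rw [← integral_map (f := fun t : ℝ => t ^ 4) (hasGaussianLaw_dotProduct w).aemeasurable
    (by fun_prop), map_dotProduct_gaussianPi, integral_map (by fun_prop) (by fun_prop)]
  simp_rw [mul_pow]
  rw [integral_const_mul, fourthMoment]
  congr 1
  nth_rw 2 [← Real.sq_sqrt hsq]
  ring

/-- The squared norm of the vector with coordinates `w j ⬝ᵥ x`. -/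
noncomputable def sqNorm {d : ℕ} (w : Fin d → Fin d → ℝ) (x : Fin d → ℝ) : ℝ :=
  ∑ j, (w j ⬝ᵥ x) ^ 2

/-- The squared Frobenius norm of the matrix with rows `w j`. -/
noncomputable def sqFrobenius {d : ℕ} (w : Fin d → Fin d → ℝ) : ℝ :=
  ∑ j, w j ⬝ᵥ w j

lemma integrable_sqNorm {d : ℕ} (w : Fin d → Fin d → ℝ) :
    Integrable (sqNorm w) (gaussianPi d) :=
  integrable_finsetSum _ fun j _ => integrable_dotProduct_pow (w j) even_two

lemma integral_sqNorm {d : ℕ} (w : Fin d → Fin d → ℝ) :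
    ∫ x, sqNorm w x ∂gaussianPi d = sqFrobenius w := by
  simp only [sqNorm]
  rw [integral_finsetSum _ fun j _ => integrable_dotProduct_pow (w j) even_two]
  simp [integral_dotProduct_sq, sqFrobenius]

lemma sqNorm_sq_le {d : ℕ} (w : Fin d → Fin d → ℝ) (x : Fin d → ℝ) :
    sqNorm w x ^ 2 ≤ sqFrobenius w * ∑ j, (w j ⬝ᵥ x) ^ 4 / (w j ⬝ᵥ w j) := by
  have hsq (v : Fin d → ℝ) : 0 ≤ v ⬝ᵥ v := Finset.sum_nonneg fun i _ => mul_self_nonneg _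
  refine Finset.sum_sq_le_sum_mul_sum_of_sq_le_mul _ (fun j _ => hsq _)
    (fun j _ => div_nonneg (by positivity) (hsq _)) fun j _ => ?_
  by_cases h : w j ⬝ᵥ w j = 0
  · have : w j = 0 := dotProduct_self_eq_zero.1 h
    simp [this]
  · rw [mul_div_cancel₀ _ h]
    exact le_of_eq (by ring)

lemma integrable_sqNorm_sq {d : ℕ} (w : Fin d → Fin d → ℝ) :
    Integrable (fun x => sqNorm w x ^ 2) (gaussianPi d) := by
  refine Integrable.mono' (((integrable_finsetSum Finset.univ fun j _ =>
    (integrable_dotProduct_pow (w j) even_four).div_const (w j ⬝ᵥ w j))).const_mul (sqFrobenius w))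
    ((integrable_sqNorm w).aestronglyMeasurable.pow 2) (.of_forall fun x => ?_)
  rw [Real.norm_of_nonneg (sq_nonneg _)]
  simpa using sqNorm_sq_le w x

lemma integral_sqNorm_sq_le {d : ℕ} (w : Fin d → Fin d → ℝ) :
    ∫ x, sqNorm w x ^ 2 ∂gaussianPi d ≤ sqFrobenius w ^ 2 * fourthMoment := by
  have hint (j : Fin d) : Integrable (fun x => (w j ⬝ᵥ x) ^ 4 / (w j ⬝ᵥ w j)) (gaussianPi d) :=
    (integrable_dotProduct_pow (w j) even_four).div_const _
  refine (integral_mono (integrable_sqNorm_sq w)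
    ((integrable_finsetSum Finset.univ fun j _ => hint j).const_mul (sqFrobenius w))
    fun x => ?_).trans (le_of_eq ?_)
  · simpa using sqNorm_sq_le w x
  · rw [integral_const_mul, integral_finsetSum _ fun j _ => hint j]
    simp_rw [integral_div, integral_dotProduct_pow_four]
    rw [sq (sqFrobenius w), mul_assoc]
    congr 1
    rw [sqFrobenius, Finset.sum_mul]
    refine Finset.sum_congr rfl fun j _ => ?_
    by_cases h : w j ⬝ᵥ w j = 0
    · simp [h]
    · field_simp

lemma div_ge_quartic {a b m : ℝ} (ha : 0 ≤ a) (hb : 0 < b) (hm : 0 < m) :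
    2 * a ^ 2 / m - (3 * a ^ 4 + b ^ 4) / (4 * m ^ 2) ≤ a / b := by
  have h1 : 0 ≤ a / b * (1 - a * b / m) ^ 2 := by positivity
  have h2 : a / b * (1 - a * b / m) ^ 2 = a / b - 2 * a ^ 2 / m + a ^ 3 * b / m ^ 2 := by
    field_simp; ring
  have h3 : a ^ 3 * b / m ^ 2 ≤ (3 * a ^ 4 + b ^ 4) / (4 * m ^ 2) := by
    rw [div_le_div_iff₀ (by positivity) (by positivity)]
    have : 4 * (a ^ 3 * b) ≤ 3 * a ^ 4 + b ^ 4 := by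
      nlinarith [mul_nonneg (sq_nonneg (a - b)) (sq_nonneg (a + b)), sq_nonneg (a - b),
        mul_nonneg (sq_nonneg (a - b)) (sq_nonneg a), mul_nonneg (sq_nonneg (a - b)) (sq_nonneg b)]
    nlinarith [sq_nonneg m]
  linarith

/-- An integrable upper bound of `|Wx| / |x|` has expectation at least a constant times
`‖W‖_F / √d` under the standard Gaussian measure. -/
lemma frobenius_div_le_integral {d : ℕ} (w : Fin d → Fin d → ℝ) {f : (Fin d → ℝ) → ℝ}
    (hf : Integrable f (gaussianPi d)) (hf0 : ∀ x, 0 ≤ f x)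
    (hwf : ∀ x, √(sqNorm w x) / √(x ⬝ᵥ x) ≤ f x) :
    (fourthMoment + 1)⁻¹ * √(sqFrobenius w) / √d ≤ ∫ x, f x ∂gaussianPi d := by
  have hm : 0 < fourthMoment + 1 := by linarith [fourthMoment_nonneg]
  set m := fourthMoment + 1 with hm_def
  have hF : 0 ≤ sqFrobenius w :=
    Finset.sum_nonneg fun j _ => Finset.sum_nonneg fun i _ => mul_self_nonneg _
  rcases hF.eq_or_lt with hF | hF
  · simpa [← hF] using integral_nonneg hf0
  rcases Nat.eq_zero_or_pos d with rfl | hd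
  · simpa using integral_nonneg hf0
  have hd : (0 : ℝ) < d := by exact_mod_cast hd
  set e : Fin d → Fin d → ℝ := (1 : Matrix (Fin d) (Fin d) ℝ)
  have he (x : Fin d → ℝ) : sqNorm e x = x ⬝ᵥ x := by
    have (j : Fin d) : e j ⬝ᵥ x = x j := congrFun (one_mulVec x) j
    simp only [sqNorm, this, sq]
    rfl
  have heF : sqFrobenius e = d := by
    simp [sqFrobenius, e, dotProduct, one_apply]
  set F := sqFrobenius w
  set g : (Fin d → ℝ) → ℝ := fun x => √F / √d *
    (2 / (F * m) * sqNorm w x - (3 / (4 * F ^ 2 * m ^ 2) * sqNorm w x ^ 2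
      + 1 / (4 * (d : ℝ) ^ 2 * m ^ 2) * sqNorm e x ^ 2)) with hg
  have h1 := (integrable_sqNorm w).const_mul (2 / (F * m))
  have h2 := (integrable_sqNorm_sq w).const_mul (3 / (4 * F ^ 2 * m ^ 2))
  have h3 := (integrable_sqNorm_sq e).const_mul (1 / (4 * (d : ℝ) ^ 2 * m ^ 2))
  have hgi : Integrable g (gaussianPi d) := (h1.sub (h2.add h3)).const_mul _
  have hle : g ≤ᵐ[gaussianPi d] f := by
    refine .of_forall fun x => ?_
    have hs : 0 ≤ sqNorm w x := Finset.sum_nonneg fun j _ => sq_nonneg _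
    have hx : 0 ≤ x ⬝ᵥ x := Finset.sum_nonneg fun i _ => mul_self_nonneg _
    rcases hx.eq_or_lt with hx | hx
    · have hx0 : x = 0 := dotProduct_self_eq_zero.1 hx.symm
      refine le_trans (le_of_eq ?_) (hf0 x)
      simp [hg, hx0, sqNorm]
    · refine le_trans ?_ (hwf x)
      have h := div_ge_quartic (a := √(sqNorm w x) / √F) (b := √(x ⬝ᵥ x) / √d)
        (by positivity) (by positivity) hm
      have hp4 (t : ℝ) : t ^ 4 = (t ^ 2) ^ 2 := by ring
      rw [hp4, hp4 (√(x ⬝ᵥ x) / √d), div_pow (√_), div_pow (√(x ⬝ᵥ x)), Real.sq_sqrt hs, Real.sq_sqrt hF.le,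
        Real.sq_sqrt hx.le, Real.sq_sqrt hd.le] at h
      calc g x = √F / √d * (2 * (sqNorm w x / F) / m -
            (3 * (sqNorm w x / F) ^ 2 + (x ⬝ᵥ x / d) ^ 2) / (4 * m ^ 2)) := by
              simp only [hg, he]; congr 1; field_simp
        _ ≤ √F / √d * (√(sqNorm w x) / √F / (√(x ⬝ᵥ x) / √d)) := by gcongr
        _ = _ := by
          have : √F ≠ 0 := by positivity
          have : √(d : ℝ) ≠ 0 := by positivity
          field_simp
  refine le_trans ?_ (integral_mono_ae hgi hf hle)
  have hgint : ∫ x, g x ∂gaussianPi d = √F / √d * (2 / (F * m) * F -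
      (3 / (4 * F ^ 2 * m ^ 2) * ∫ x, sqNorm w x ^ 2 ∂gaussianPi d
        + 1 / (4 * (d : ℝ) ^ 2 * m ^ 2) * ∫ x, sqNorm e x ^ 2 ∂gaussianPi d)) := by
    simp only [hg]
    rw [integral_const_mul, integral_sub h1 (by exact h2.add h3), integral_add h2 h3, integral_const_mul,
      integral_const_mul, integral_const_mul, integral_sqNorm]
  have hw4 := integral_sqNorm_sq_le w
  have he4 := integral_sqNorm_sq_le e
  rw [heF] at he4
  rw [hgint]
  calc m⁻¹ * √F / √d = √F / √d * m⁻¹ := by ring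
    _ ≤ √F / √d * (2 / (F * m) * F - (3 / (4 * F ^ 2 * m ^ 2) * (F ^ 2 * fourthMoment)
        + 1 / (4 * (d : ℝ) ^ 2 * m ^ 2) * ((d : ℝ) ^ 2 * fourthMoment))) := by
        gcongr
        have : 2 / (F * m) * F - (3 / (4 * F ^ 2 * m ^ 2) * (F ^ 2 * fourthMoment)
            + 1 / (4 * (d : ℝ) ^ 2 * m ^ 2) * ((d : ℝ) ^ 2 * fourthMoment))
            = m⁻¹ + m⁻¹ ^ 2 := by
          rw [show fourthMoment = m - 1 by simp [hm_def]]
          field_simp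
          ring
        rw [this]
        have : 0 ≤ m⁻¹ ^ 2 := by positivity
        linarith
    _ ≤ _ := by gcongr

lemma vecMul_dotProduct_self_of_mem_orthogonalGroup {d : ℕ} {U : Matrix (Fin d) (Fin d) ℝ}
    (hU : U ∈ Matrix.orthogonalGroup (Fin d) ℝ) (x : Fin d → ℝ) :
    (x ᵥ* U) ⬝ᵥ (x ᵥ* U) = x ⬝ᵥ x := by
  have h : U * Uᵀ = 1 := by simpa [star_eq_conjTranspose] using (mem_orthogonalGroup_iff _ _).1 hU
  rw [← dotProduct_mulVec, ← vecMul_transpose, vecMul_vecMul, h, vecMul_one]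

/-- There is `C₁ > 0` such that for all `d` and orthogonal `U, V`,
`P_{x ∼ N(0,I_{2d})}(sign(x_{1:d}ᵀ U x_{d+1:2d}) ≠ sign(x_{1:d}ᵀ V x_{d+1:2d}))
  ≥ C₁ ‖U − V‖_F / √d`. -/
theorem stmt_12 :
    ∃ C₁ : ℝ, 0 < C₁ ∧ ∀ (d : ℕ) (U V : Matrix (Fin d) (Fin d) ℝ),
      U ∈ Matrix.orthogonalGroup (Fin d) ℝ →
      V ∈ Matrix.orthogonalGroup (Fin d) ℝ →
      C₁ * Real.sqrt (∑ i, ∑ j, (U i j - V i j) ^ 2) / Real.sqrt d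
        ≤ (stdGaussian2 d {x | Real.sign (∑ i, ∑ j, x (Sum.inl i) * U i j * x (Sum.inr j))
            ≠ Real.sign (∑ i, ∑ j, x (Sum.inl i) * V i j * x (Sum.inr j))}).toReal := by
  have hM := fourthMoment_nonneg
  have hκ := densityBound_pos
  refine ⟨densityBound ^ 2 * (fourthMoment + 1)⁻¹, by positivity, fun d U V hU hV => ?_⟩
  have hform (A : Matrix (Fin d) (Fin d) ℝ) (x y : Fin d → ℝ) :
      ∑ i, ∑ j, x i * A i j * y j = (x ᵥ* A) ⬝ᵥ y := by
    simp only [dotProduct, vecMul, Finset.sum_mul]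
    exact Finset.sum_comm
  set S : Set ((Fin d → ℝ) × (Fin d → ℝ)) :=
    {z | Real.sign ((z.1 ᵥ* U) ⬝ᵥ z.2) ≠ Real.sign ((z.1 ᵥ* V) ⬝ᵥ z.2)}
  have hsign : Measurable Real.sign := by
    unfold Real.sign
    exact Measurable.ite measurableSet_Iio measurable_const
      (Measurable.ite measurableSet_Ioi measurable_const measurable_const)
  have hmeas (A : Matrix (Fin d) (Fin d) ℝ) :
      Measurable fun z : (Fin d → ℝ) × (Fin d → ℝ) => Real.sign ((z.1 ᵥ* A) ⬝ᵥ z.2) := by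
    refine hsign.comp ?_
    simp only [← hform]
    fun_prop
  have hS : MeasurableSet S := (measurableSet_eq_fun (hmeas U) (hmeas V)).compl
  have hprob : (stdGaussian2 d {x | Real.sign (∑ i, ∑ j, x (Sum.inl i) * U i j * x (Sum.inr j))
      ≠ Real.sign (∑ i, ∑ j, x (Sum.inl i) * V i j * x (Sum.inr j))}).toReal =
      ∫ x, (gaussianPi d).real (Prod.mk x ⁻¹' S) ∂gaussianPi d := by
    have hpre : {x : Fin d ⊕ Fin d → ℝ |
        Real.sign (∑ i, ∑ j, x (Sum.inl i) * U i j * x (Sum.inr j))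
          ≠ Real.sign (∑ i, ∑ j, x (Sum.inl i) * V i j * x (Sum.inr j))} =
        MeasurableEquiv.sumPiEquivProdPi (fun _ : Fin d ⊕ Fin d => ℝ) ⁻¹' S := by
      ext x
      have h (A : Matrix (Fin d) (Fin d) ℝ) :
          ∑ i, ∑ j, x (Sum.inl i) * A i j * x (Sum.inr j) =
            ((fun i => x (Sum.inl i)) ᵥ* A) ⬝ᵥ fun j => x (Sum.inr j) := hform A _ _
      rw [Set.mem_ofPred_eq, h U, h V]
      rfl
    rw [hpre, stdGaussian2, (measurePreserving_sumPiEquivProdPi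
      fun _ : Fin d ⊕ Fin d => gaussianReal 0 1).measure_preimage hS.nullMeasurableSet,
      Measure.prod_apply hS, ← integral_toReal (measurable_measure_prodMk_left hS).aemeasurable
        (.of_forall fun x => measure_lt_top _ _)]
    rfl
  have hint : Integrable (fun x => (gaussianPi d).real (Prod.mk x ⁻¹' S)) (gaussianPi d) :=
    Integrable.of_bound (C := 1)
      (measurable_measure_prodMk_left hS).ennreal_toReal.aestronglyMeasurable
      (.of_forall fun x => by
        rw [Real.norm_of_nonneg measureReal_nonneg]; exact measureReal_le_one)
  set w : Fin d → Fin d → ℝ := fun j i => U i j - V i j with hw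
  have hnorm (x : Fin d → ℝ) : (x ᵥ* U - x ᵥ* V) ⬝ᵥ (x ᵥ* U - x ᵥ* V) = sqNorm w x := by
    rw [← vecMul_sub]
    simp only [sqNorm, dotProduct, vecMul, hw, Matrix.sub_apply, sq, mul_comm (x _)]
  have hfrob : ∑ i, ∑ j, (U i j - V i j) ^ 2 = sqFrobenius w := by
    rw [Finset.sum_comm]
    simp [sqFrobenius, hw, dotProduct, sq]
  have hcond (x : Fin d → ℝ) : densityBound ^ 2 * (√(sqNorm w x) / √(x ⬝ᵥ x)) ≤
      (gaussianPi d).real (Prod.mk x ⁻¹' S) := by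
    have hx : 0 ≤ x ⬝ᵥ x := Finset.sum_nonneg fun i _ => mul_self_nonneg _
    rw [← hnorm]
    exact le_measureReal_sign_dotProduct_ne (Real.sqrt_nonneg _)
      (by rw [Real.sq_sqrt hx, vecMul_dotProduct_self_of_mem_orthogonalGroup hU])
      (by rw [Real.sq_sqrt hx, vecMul_dotProduct_self_of_mem_orthogonalGroup hV])
  rw [hprob, hfrob]
  have h := frobenius_div_le_integral w
    (f := fun x => (densityBound ^ 2)⁻¹ * (gaussianPi d).real (Prod.mk x ⁻¹' S))
    (hint.const_mul _) (fun x => by positivity)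
    fun x => by rw [le_inv_mul_iff₀ (by positivity)]; exact hcond x
  rw [integral_const_mul, le_inv_mul_iff₀ (by positivity)] at h
  exact le_trans (le_of_eq (by ring)) h
end
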